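/- For sets A, B ⊆ ℕ, lim_{n→∞} (A(n) − B(n))/n = 0 if and only if μ(A) = μ(B) for every density measure μ. -/

import Mathlib

open Filter Topology

/-- The counting function `A(n) = |A ∩ [1, n]|`, as a real number. -/
noncomputable def count (A : Set ℕ) (n : ℕ) : ℝ :=
  ((A ∩ Set.Icc 1 n).ncard : ℝ)

/-- `A ⊆ ℕ` has asymptotic density `a`, i.e. `A(n)/n → a`. -/
def HasDensity (A : Set ℕ) (a : ℝ) : Prop :=
  Filter.Tendsto (fun n : ℕ => count A n / n) Filter.atTop (nhds a)

/-- Membership of a permutation `π` of `ℕ` in the Lévy group `𝒢`: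
`|{k : k ≤ n < π(k)}| / n → 0`. -/
def InLevyGroup (π : Equiv.Perm ℕ) : Prop :=
  Filter.Tendsto
    (fun n : ℕ => (({k : ℕ | k ≤ n ∧ n < π k}.ncard : ℝ) / n))
    Filter.atTop (nhds 0)

/-- A finitely additive probability measure defined on all subsets of `ℕ`,
with values in `[0, 1]`. -/
def IsFAMeasure (μ : Set ℕ → ℝ) : Prop :=
  (∀ A : Set ℕ, 0 ≤ μ A) ∧ (∀ A : Set ℕ, μ A ≤ 1) ∧ μ Set.univ = 1 ∧
    ∀ A B : Set ℕ, Disjoint A B → μ (A ∪ B) = μ A + μ B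

/-- A density measure: a finitely additive measure extending asymptotic density. -/
def IsDensityMeasure (μ : Set ℕ → ℝ) : Prop :=
  IsFAMeasure μ ∧ ∀ (A : Set ℕ) (a : ℝ), HasDensity A a → μ A = a

/-- Statistical convergence of a real sequence `x` to `L`: for every `ε > 0`
the set `{n : |x n − L| ≥ ε}` has asymptotic density zero. -/
def StatTendsto (x : ℕ → ℝ) (L : ℝ) : Prop :=
  ∀ ε : ℝ, 0 < ε → HasDensity {n : ℕ | ε ≤ |x n - L|} 0

/-- The limit of a (bounded) real sequence along an ultrafilter on `ℕ`. -/
noncomputable def ulim (𝒰 : Ultrafilter ℕ) (x : ℕ → ℝ) : ℝ :=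
  limUnder (𝒰 : Filter ℕ) x

theorem count_zero (A : Set ℕ) : count A 0 = 0 := by
  simp [count]

open Classical in
theorem count_succ (A : Set ℕ) (n : ℕ) :
    count A (n + 1) = count A n + if n + 1 ∈ A then 1 else 0 := by
  have hI : Set.Icc 1 (n + 1) = insert (n + 1) (Set.Icc 1 n) := by
    ext k
    simp only [Set.mem_Icc, Set.mem_insert_iff]
    omega
  have hfin : (A ∩ Set.Icc 1 n).Finite := (Set.finite_Icc 1 n).inter_of_right A
  unfold count
  split_ifs with h
  · rw [hI, Set.inter_insert_of_mem h, Set.ncard_insert_of_notMem (by simp) hfin]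
    push_cast
    rfl
  · rw [hI, Set.inter_insert_of_notMem h, add_zero]

theorem count_univ (n : ℕ) : count Set.univ n = n := by
  induction n with
  | zero => simp [count_zero]
  | succ n ih => simp [count_succ, ih]

theorem count_union {A B : Set ℕ} (h : Disjoint A B) (n : ℕ) :
    count (A ∪ B) n = count A n + count B n := by
  induction n with
  | zero => simp [count_zero]
  | succ n ih =>
    have hdisj : n + 1 ∈ A → n + 1 ∉ B := fun hA => Set.disjoint_left.mp h hA
    simp only [count_succ, ih, Set.mem_union]
    by_cases hA : n + 1 ∈ A <;> by_cases hB : n + 1 ∈ B <;> simp_all <;> ring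

theorem count_nonneg (A : Set ℕ) (n : ℕ) : 0 ≤ count A n :=
  Nat.cast_nonneg _

theorem count_compl (A : Set ℕ) (n : ℕ) : count Aᶜ n = n - count A n := by
  have := count_union (disjoint_compl_right (a := A)) n
  rw [Set.union_compl_self, count_univ] at this
  linarith

theorem count_div_mem_Icc (A : Set ℕ) (n : ℕ) : count A n / n ∈ Set.Icc (0 : ℝ) 1 := by
  have h := count_compl A n
  have h' := count_nonneg Aᶜ n
  exact ⟨div_nonneg (count_nonneg A n) n.cast_nonneg,
    div_le_one_of_le₀ (by linarith) n.cast_nonneg⟩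

/-- Along an ultrafilter refining `atTop`, the limits of `A(n)/n` form a density measure. -/
theorem exists_densityMeasure_tendsto (𝒰 : Ultrafilter ℕ) (h𝒰 : (𝒰 : Filter ℕ) ≤ atTop) :
    ∃ μ : Set ℕ → ℝ, IsDensityMeasure μ ∧
      ∀ A, Tendsto (fun n : ℕ => count A n / n) 𝒰 (𝓝 (μ A)) := by
  have hlim (A : Set ℕ) :
      ∃ a ∈ Set.Icc (0 : ℝ) 1, Tendsto (fun n : ℕ => count A n / n) 𝒰 (𝓝 a) :=
    isCompact_Icc.ultrafilter_le_nhds (𝒰.map fun n : ℕ => count A n / n)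
      (tendsto_principal.mpr (Eventually.of_forall (count_div_mem_Icc A)))
  choose μ hμ hlim using hlim
  have hdens (A : Set ℕ) (a : ℝ) (h : HasDensity A a) : μ A = a :=
    tendsto_nhds_unique (hlim A) (h.mono_left h𝒰)
  refine ⟨μ, ⟨⟨fun A => (hμ A).1, fun A => (hμ A).2, ?_, fun A B hAB => ?_⟩, hdens⟩, hlim⟩
  · refine hdens _ _ (tendsto_const_nhds.congr' ?_)
    filter_upwards [eventually_gt_atTop 0] with n hn
    rw [count_univ, div_self (by positivity)]
  · refine tendsto_nhds_unique (hlim _) (((hlim A).add (hlim B)).congr fun n => ?_)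
    rw [count_union hAB, add_div]

/-- Every set of naturals splits into two parts whose counting functions differ by at most one:
put its elements alternately into the two parts. -/
theorem exists_balanced_subset (D : Set ℕ) :
    ∃ C ⊆ D, ∀ n, |count C n - count (D \ C) n| ≤ 1 := by
  classical
  let c (n : ℕ) : ℕ := Nat.count (· ∈ D) (n + 1)
  let C : Set ℕ := {k ∈ D | Even (Nat.count (· ∈ D) k)}
  have key (n : ℕ) :
      count C n - count (D \ C) n = ((-1) ^ c 0 - (-1) ^ c n) / 2 := by
    induction n with
    | zero => simp [count_zero]
    | succ n ih =>
      have hc : c (n + 1) = c n + if n + 1 ∈ D then 1 else 0 := Nat.count_succ _ _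
      have hC : n + 1 ∈ C ↔ n + 1 ∈ D ∧ Even (c n) := Iff.rfl
      rw [count_succ, count_succ, hc, Set.mem_sdiff, hC]
      by_cases hD : n + 1 ∈ D
      · rcases Nat.even_or_odd (c n) with he | ho
        · simp only [hD, he, he.neg_one_pow, if_true, pow_succ] at ih ⊢
          norm_num
          linarith
        · have he : ¬ Even (c n) := Nat.not_even_iff_odd.mpr ho
          simp only [hD, he, ho.neg_one_pow, if_true, pow_succ] at ih ⊢
          norm_num
          linarith
      · simpa [hD] using ih
  refine ⟨C, fun k hk => hk.1, fun n => ?_⟩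
  rw [key, abs_le]
  rcases neg_one_pow_eq_or ℝ (c 0) with h | h <;>
    rcases neg_one_pow_eq_or ℝ (c n) with h' | h' <;> rw [h, h'] <;> norm_num

theorem hasDensity_half_of_tendsto {E : Set ℕ}
    (h : Tendsto (fun n : ℕ => (count E n - count Eᶜ n) / n) atTop (𝓝 0)) :
    HasDensity E (1 / 2) := by
  have h' := (h.div_const 2).const_add (1 / 2)
  rw [zero_div, add_zero] at h'
  refine h'.congr' ?_
  filter_upwards [eventually_gt_atTop 0] with n hn
  rw [count_compl]
  field_simp
  ring

/-- If `A` and `B` are disjoint and `C` is half of the complement of `A ∪ B`, then `A ∪ C` has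
density `1 / 2`. -/
theorem hasDensity_union_half {A B C : Set ℕ} (hAB : Disjoint A B) (hC : C ⊆ (A ∪ B)ᶜ)
    (hbal : ∀ n, |count C n - count ((A ∪ B)ᶜ \ C) n| ≤ 1)
    (h : Tendsto (fun n : ℕ => (count A n - count B n) / n) atTop (𝓝 0)) :
    HasDensity (A ∪ C) (1 / 2) := by
  have hlim : Tendsto (fun n : ℕ => (count C n - count ((A ∪ B)ᶜ \ C) n) / n) atTop (𝓝 0) := by
    refine squeeze_zero_norm (fun n => ?_) tendsto_one_div_atTop_nhds_zero_nat
    rw [norm_div, Real.norm_natCast]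
    exact div_le_div_of_nonneg_right (hbal n) n.cast_nonneg
  have hAC : Disjoint A C :=
    Set.disjoint_left.mpr fun k hA hk => hC hk (Or.inl hA)
  have hBC : Disjoint B ((A ∪ B)ᶜ \ C) :=
    Set.disjoint_left.mpr fun k hB hk => hk.1 (Or.inr hB)
  have hcompl : (A ∪ C)ᶜ = B ∪ ((A ∪ B)ᶜ \ C) := by
    ext k
    have h₁ : k ∈ A → k ∉ B := fun hA => Set.disjoint_left.mp hAB hA
    have h₂ := @hC k
    simp only [Set.mem_compl_iff, Set.mem_union, Set.mem_sdiff] at h₂ ⊢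
    tauto
  have hsum := h.add hlim
  rw [add_zero] at hsum
  refine hasDensity_half_of_tendsto (hsum.congr fun n => ?_)
  rw [hcompl, count_union hAC, count_union hBC]
  ring

theorem IsDensityMeasure.eq_of_disjoint {μ : Set ℕ → ℝ} (hμ : IsDensityMeasure μ) {A B : Set ℕ}
    (hAB : Disjoint A B)
    (h : Tendsto (fun n : ℕ => (count A n - count B n) / n) atTop (𝓝 0)) : μ A = μ B := by
  obtain ⟨C, hC, hbal⟩ := exists_balanced_subset (A ∪ B)ᶜ
  have h' : Tendsto (fun n : ℕ => (count B n - count A n) / n) atTop (𝓝 0) := by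
    simpa only [neg_zero, ← neg_div, neg_sub] using h.neg
  have hA := hμ.2 _ _ (hasDensity_union_half hAB hC hbal h)
  have hB := hμ.2 _ _ (hasDensity_union_half (C := C) hAB.symm
    (by rwa [Set.union_comm]) (by rwa [Set.union_comm]) h')
  rw [hμ.1.2.2.2 A C (Set.disjoint_left.mpr fun k hk hk' => hC hk' (Or.inl hk))] at hA
  rw [hμ.1.2.2.2 B C (Set.disjoint_left.mpr fun k hk hk' => hC hk' (Or.inr hk))] at hB
  linarith

/-- `(A(n) − B(n))/n → 0` iff `μ(A) = μ(B)` for every density measure `μ`. -/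
theorem count_diff_tendsto_zero_iff_all_densityMeasures_eq (A B : Set ℕ) :
    Filter.Tendsto (fun n : ℕ => (count A n - count B n) / n)
        Filter.atTop (nhds 0) ↔
      ∀ μ : Set ℕ → ℝ, IsDensityMeasure μ → μ A = μ B := by
  constructor
  · intro h μ hμ
    have hA : Disjoint (A \ B) (A ∩ B) := Set.disjoint_sdiff_inter
    have hB : Disjoint (B \ A) (A ∩ B) := by
      rw [Set.inter_comm]
      exact Set.disjoint_sdiff_inter
    have hA' : A \ B ∪ A ∩ B = A := Set.sdiff_union_inter A B
    have hB' : B \ A ∪ A ∩ B = B := by rw [Set.inter_comm, Set.sdiff_union_inter]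
    have hdiff : μ (A \ B) = μ (B \ A) := by
      refine hμ.eq_of_disjoint disjoint_sdiff_sdiff (h.congr fun n => ?_)
      have h₁ := count_union hA n
      have h₂ := count_union hB n
      rw [hA'] at h₁
      rw [hB'] at h₂
      rw [h₁, h₂, add_sub_add_right_eq_sub]
    have h₁ := hμ.1.2.2.2 _ _ hA
    have h₂ := hμ.1.2.2.2 _ _ hB
    rw [hA'] at h₁
    rw [hB'] at h₂
    rw [h₁, h₂, hdiff]
  · intro h
    rw [tendsto_iff_ultrafilter]
    intro 𝒰 h𝒰
    obtain ⟨μ, hμ, hlim⟩ := exists_densityMeasure_tendsto 𝒰 h𝒰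
    have hsub := (hlim A).sub (hlim B)
    rw [h μ hμ, sub_self] at hsub
    exact hsub.congr fun n => (sub_div _ _ _).symm
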